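/- Fix a rewrite order ⊴. If G ⊆ R^m is a rewrite basis up to a term u, then G is a signature Gröbner basis up to u. -/

import Mathlib

namespace SigGB

noncomputable section

/-- Power-products in `n` indeterminates, written additively as exponent vectors
(so the power-product `1` is `0`, and multiplication of power-products is `+`). -/
abbrev PP (n : ℕ) : Type := Fin n →₀ ℕ

/-- Terms: a power-product together with a component index (`t·e_i ↝ (t, i)`). -/
abbrev Term (n m : ℕ) : Type := PP n × Fin m

/-- Multiplication of a term by a power-product: `t ⊗ (s·e_i) = (t·s)·e_i`. -/
def mulTerm {n m : ℕ} (t : PP n) (u : Term n m) : Term n m := (t + u.1, u.2)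

/-- Divisibility of terms: `u ∣ v` iff `v = t ⊗ u` for some power-product `t`. -/
def termDvd {n m : ℕ} (u v : Term n m) : Prop := ∃ t : PP n, v = mulTerm t u

/-- Componentwise lcm of power-products. -/
noncomputable def lcmPP {n : ℕ} (s t : PP n) : PP n := Finsupp.zipWith max (max_self 0) s t

/-- Strict part of a relation. -/
def strict {α : Type*} (r : α → α → Prop) (x y : α) : Prop := r x y ∧ x ≠ y

/-- `ple` is an admissible order on power-products and `tle` is a compatible
linear order on terms. -/
structure OrdersOK {n m : ℕ} (ple : PP n → PP n → Prop)
    (tle : Term n m → Term n m → Prop) : Prop where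
  ple_refl : ∀ t, ple t t
  ple_trans : ∀ s t u, ple s t → ple t u → ple s u
  ple_antisymm : ∀ s t, ple s t → ple t s → s = t
  ple_total : ∀ s t, ple s t ∨ ple t s
  ple_one_le : ∀ t, ple 0 t
  ple_mul : ∀ (t s₁ s₂ : PP n), ple s₁ s₂ → ple (t + s₁) (t + s₂)
  tle_refl : ∀ u, tle u u
  tle_trans : ∀ u v w, tle u v → tle v w → tle u w
  tle_antisymm : ∀ u v, tle u v → tle v u → u = v
  tle_total : ∀ u v, tle u v ∨ tle v u
  tle_mul : ∀ (t : PP n) (u v : Term n m), tle u v → tle (mulTerm t u) (mulTerm t v)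
  tle_compat : ∀ (s t : PP n) (i j : Fin m), ple s t → i ≤ j → tle (s, i) (t, j)

variable {K : Type*} [Field K] {n m : ℕ} [NeZero m]

variable (f : Fin m → MvPolynomial (Fin n) K)
variable (ple : PP n → PP n → Prop)
variable (tle : Term n m → Term n m → Prop)

/-- The module homomorphism `R^m → R` determined by `e_i ↦ f i`, i.e. `a ↦ ‾a`. -/
def bar (a : Fin m → MvPolynomial (Fin n) K) : MvPolynomial (Fin n) K := ∑ i, a i * f i

/-- Multiplication of a module element by a coefficient `c` and a power-product `t`. -/
noncomputable def monomMul (c : K) (t : PP n) (a : Fin m → MvPolynomial (Fin n) K) :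
    Fin m → MvPolynomial (Fin n) K :=
  fun i => MvPolynomial.monomial t c * a i

/-- The coefficient of a term in a module element. -/
def coeffM (a : Fin m → MvPolynomial (Fin n) K) (u : Term n m) : K :=
  MvPolynomial.coeff u.1 (a u.2)

open Classical in
/-- Leading power-product of a polynomial w.r.t. `ple`
(junk value `0`, i.e. the power-product `1`, for the zero polynomial). -/
noncomputable def lp (p : MvPolynomial (Fin n) K) : PP n :=
  if h : ∃ t, MvPolynomial.coeff t p ≠ 0 ∧ ∀ s, MvPolynomial.coeff s p ≠ 0 → ple s t
  then h.choose else 0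

/-- Leading coefficient of a polynomial w.r.t. `ple`. -/
noncomputable def lc (p : MvPolynomial (Fin n) K) : K := MvPolynomial.coeff (lp ple p) p

open Classical in
/-- Signature of a module element: its `tle`-largest term with nonzero coefficient
(junk value for `0`). -/
noncomputable def sig (a : Fin m → MvPolynomial (Fin n) K) : Term n m :=
  if h : ∃ u, coeffM a u ≠ 0 ∧ ∀ v, coeffM a v ≠ 0 → tle v u
  then h.choose else ((0 : PP n), (0 : Fin m))

/-- Leading coefficient of a module element. -/
noncomputable def lcM (a : Fin m → MvPolynomial (Fin n) K) : K := coeffM a (sig tle a)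

/-- One-step s-reduction of `a` to `b` modulo `G`, witnessed by `g ∈ G` and the
power-product `t`. -/
def RedStepWith (G : Set (Fin m → MvPolynomial (Fin n) K))
    (a b g : Fin m → MvPolynomial (Fin n) K) (t : PP n) : Prop :=
  g ∈ G ∧ bar f g ≠ 0 ∧
    MvPolynomial.coeff (t + lp ple (bar f g)) (bar f a) ≠ 0 ∧
    b = a - monomMul (MvPolynomial.coeff (t + lp ple (bar f g)) (bar f a) / lc ple (bar f g)) t g ∧
    tle (mulTerm t (sig tle g)) (sig tle a)

/-- The step witnessed by `g` and `t` is regular: `t ⊗ 𝔰(g) ≺_t 𝔰(a)`. -/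
def RegularWith (a g : Fin m → MvPolynomial (Fin n) K) (t : PP n) : Prop :=
  strict tle (mulTerm t (sig tle g)) (sig tle a)

/-- The step witnessed by `g` and `t` is top: `t·lp(‾g) = lp(‾a)`. -/
def TopWith (a g : Fin m → MvPolynomial (Fin n) K) (t : PP n) : Prop :=
  t + lp ple (bar f g) = lp ple (bar f a)

/-- `a` s-reduces to `b` modulo `G` in one step. -/
def SigRedStep (G : Set (Fin m → MvPolynomial (Fin n) K))
    (a b : Fin m → MvPolynomial (Fin n) K) : Prop :=
  ∃ g t, RedStepWith f ple tle G a b g t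

/-- `a` regular s-reduces to `b` modulo `G` in one step. -/
def RegRedStep (G : Set (Fin m → MvPolynomial (Fin n) K))
    (a b : Fin m → MvPolynomial (Fin n) K) : Prop :=
  ∃ g t, RedStepWith f ple tle G a b g t ∧ RegularWith tle a g t

/-- `a` regular top s-reduces to `b` modulo `G` in one step. -/
def RegTopRedStep (G : Set (Fin m → MvPolynomial (Fin n) K))
    (a b : Fin m → MvPolynomial (Fin n) K) : Prop :=
  ∃ g t, RedStepWith f ple tle G a b g t ∧ RegularWith tle a g t ∧ TopWith f ple a g t

/-- `a` is regular s-irreducible modulo `G`. -/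
def RegIrred (G : Set (Fin m → MvPolynomial (Fin n) K))
    (a : Fin m → MvPolynomial (Fin n) K) : Prop :=
  ∀ b, ¬ RegRedStep f ple tle G a b

/-- `a` is regular top s-irreducible modulo `G`. -/
def RegTopIrred (G : Set (Fin m → MvPolynomial (Fin n) K))
    (a : Fin m → MvPolynomial (Fin n) K) : Prop :=
  ∀ b, ¬ RegTopRedStep f ple tle G a b

/-- `a` s-reduces to zero modulo `G`. -/
def SigRedZero (G : Set (Fin m → MvPolynomial (Fin n) K))
    (a : Fin m → MvPolynomial (Fin n) K) : Prop :=
  ∃ b, Relation.ReflTransGen (SigRedStep f ple tle G) a b ∧ bar f b = 0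

/-- `a` regular s-reduces to zero modulo `G`. -/
def RegRedZero (G : Set (Fin m → MvPolynomial (Fin n) K))
    (a : Fin m → MvPolynomial (Fin n) K) : Prop :=
  ∃ b, Relation.ReflTransGen (RegRedStep f ple tle G) a b ∧ bar f b = 0

/-- `G` is a signature Gröbner basis in the term `u`. -/
def IsSigGBIn (G : Set (Fin m → MvPolynomial (Fin n) K)) (u : Term n m) : Prop :=
  ∀ a : Fin m → MvPolynomial (Fin n) K, a ≠ 0 → sig tle a = u → SigRedZero f ple tle G a

/-- `G` is a signature Gröbner basis up to the term `u`. -/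
def IsSigGBUpto (G : Set (Fin m → MvPolynomial (Fin n) K)) (u : Term n m) : Prop :=
  ∀ v, strict tle v u → IsSigGBIn f ple tle G v

/-- `u` is a syzygy signature. -/
def IsSyzSig (u : Term n m) : Prop :=
  ∃ a : Fin m → MvPolynomial (Fin n) K, a ≠ 0 ∧ sig tle a = u ∧ bar f a = 0

/-- The sig-poly-pair `(𝔰(a), ‾a)` of a module element `a`. -/
noncomputable def sppOf (a : Fin m → MvPolynomial (Fin n) K) :
    Term n m × MvPolynomial (Fin n) K :=
  (sig tle a, bar f a)

/-- `x` is a sig-poly-pair. -/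
def IsSPP (x : Term n m × MvPolynomial (Fin n) K) : Prop :=
  ∃ a : Fin m → MvPolynomial (Fin n) K, a ≠ 0 ∧ sppOf f tle a = x

/-- `ro` is a rewrite order. -/
def IsRewriteOrder
    (ro : Term n m × MvPolynomial (Fin n) K → Term n m × MvPolynomial (Fin n) K → Prop) :
    Prop :=
  (∀ x, IsSPP f tle x → ro x x) ∧
  (∀ x y z, IsSPP f tle x → IsSPP f tle y → IsSPP f tle z → ro x y → ro y z → ro x z) ∧
  (∀ x y, IsSPP f tle x → IsSPP f tle y → (ro x y ∨ ro y x)) ∧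
  (∀ x y, IsSPP f tle x → IsSPP f tle y → ro x y → ro y x → x.1 = y.1) ∧
  (∀ (G : Set (Fin m → MvPolynomial (Fin n) K)) (a b : Fin m → MvPolynomial (Fin n) K),
    IsSigGBUpto f ple tle G (sig tle b) → a ∈ G → b ∈ G → a ≠ 0 → b ≠ 0 →
    termDvd (sig tle a) (sig tle b) → RegTopIrred f ple tle G b →
    ro (sppOf f tle a) (sppOf f tle b))

/-- `a` is a canonical rewriter in the term `u` w.r.t. `G` (for the rewrite order `ro`). -/
def IsCanonRewriter
    (ro : Term n m × MvPolynomial (Fin n) K → Term n m × MvPolynomial (Fin n) K → Prop)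
    (G : Set (Fin m → MvPolynomial (Fin n) K)) (u : Term n m)
    (a : Fin m → MvPolynomial (Fin n) K) : Prop :=
  a ∈ G ∧ a ≠ 0 ∧ termDvd (sig tle a) u ∧
    ∀ g ∈ G, g ≠ 0 → termDvd (sig tle g) u → ro (sppOf f tle g) (sppOf f tle a)

/-- `G` is a rewrite basis in the term `u` (for the rewrite order `ro`). -/
def IsRBIn
    (ro : Term n m × MvPolynomial (Fin n) K → Term n m × MvPolynomial (Fin n) K → Prop)
    (G : Set (Fin m → MvPolynomial (Fin n) K)) (u : Term n m) : Prop :=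
  IsSyzSig f tle u ∨
    ∃ g, IsCanonRewriter f tle ro G u g ∧
      RegTopIrred f ple tle G (monomMul (1 : K) (u.1 - (sig tle g).1) g)

/-- `G` is a rewrite basis up to the term `u` (for the rewrite order `ro`). -/
def IsRBUpto
    (ro : Term n m × MvPolynomial (Fin n) K → Term n m × MvPolynomial (Fin n) K → Prop)
    (G : Set (Fin m → MvPolynomial (Fin n) K)) (u : Term n m) : Prop :=
  ∀ v, strict tle v u → IsRBIn f ple tle ro G v

/-- The S-pair of two module elements. -/
noncomputable def spair (a b : Fin m → MvPolynomial (Fin n) K) :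
    Fin m → MvPolynomial (Fin n) K :=
  monomMul ((1 : K) / lc ple (bar f a))
      (lcmPP (lp ple (bar f a)) (lp ple (bar f b)) - lp ple (bar f a)) a -
    monomMul ((1 : K) / lc ple (bar f b))
      (lcmPP (lp ple (bar f a)) (lp ple (bar f b)) - lp ple (bar f b)) b

/-- `a` and `b` give rise to a regular S-pair. -/
def IsRegularSPair (a b : Fin m → MvPolynomial (Fin n) K) : Prop :=
  bar f a ≠ 0 ∧ bar f b ≠ 0 ∧
    mulTerm (lcmPP (lp ple (bar f a)) (lp ple (bar f b)) - lp ple (bar f a)) (sig tle a) ≠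
      mulTerm (lcmPP (lp ple (bar f a)) (lp ple (bar f b)) - lp ple (bar f b)) (sig tle b)

/-- `B` is a Gröbner basis of the ideal `I` w.r.t. `ple`. -/
def IsGroebnerBasis (B : Set (MvPolynomial (Fin n) K)) (I : Ideal (MvPolynomial (Fin n) K)) :
    Prop :=
  (∀ b ∈ B, b ∈ I) ∧ Ideal.span B = I ∧
    ∀ p ∈ I, p ≠ 0 → ∃ b ∈ B, b ≠ 0 ∧ ∃ t : PP n, lp ple p = t + lp ple b

/-- One step of ordinary polynomial reduction of `p` to `q` modulo `B`. -/
def PolyRedStep (B : Set (MvPolynomial (Fin n) K)) (p q : MvPolynomial (Fin n) K) : Prop :=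
  ∃ r ∈ B, r ≠ 0 ∧ ∃ t : PP n, MvPolynomial.coeff (t + lp ple r) p ≠ 0 ∧
    q = p - MvPolynomial.monomial t (MvPolynomial.coeff (t + lp ple r) p / lc ple r) * r

/-!
Let `a` and `b` be regular top s-irreducible modulo `G`, with the same signature `v` and the same
leading coefficient, and suppose `G` is a signature Gröbner basis up to `v`. Then `‾a` and `‾b` have
the same leading term (if both are nonzero): otherwise the leading power-product of `‾a - ‾b` would
be that of `‾a` or of `‾b`, but `a - b` has signature below `v`, so it s-reduces to zero and the
reducer of its leading power-product would be a regular top reducer of `a` or of `b`.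

Hence, by induction on `v`: regular top reduction brings an element of signature `v` to an
irreducible `b`, a scalar multiple of an irreducible `t·g` with `t ⊗ 𝔰(g) = v` s-reduces `b` to an
element of smaller signature, and this one s-reduces to zero. If instead `v` is a syzygy signature,
subtracting a multiple of the syzygy lowers the signature without changing the image.
-/

open MvPolynomial
open scoped MonomialOrder

section Polynomial

variable {σ R : Type*} [CommRing R] {M : MonomialOrder σ} {p q : MvPolynomial σ R}

theorem degree_sub_le_left (hdeg : M.degree p = M.degree q) :
    M.degree (p - q) ≼[M] M.degree p := by
  simpa [← hdeg] using M.degree_sub_le (f := p) (g := q)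

theorem degree_sub_lt_left_iff (hdeg : M.degree p = M.degree q) (hpq : p - q ≠ 0) :
    M.degree (p - q) ≺[M] M.degree p ↔ M.leadingCoeff p = M.leadingCoeff q := by
  have hcoeff : coeff (M.degree p) (p - q) = M.leadingCoeff p - M.leadingCoeff q := by
    rw [coeff_sub, MonomialOrder.leadingCoeff, MonomialOrder.leadingCoeff, hdeg]
  refine ⟨fun hlt => ?_, fun hlc => (degree_sub_le_left hdeg).lt_of_ne fun heq => ?_⟩
  · rw [← sub_eq_zero, ← hcoeff, M.coeff_eq_zero_of_lt hlt]
  · refine M.leadingCoeff_ne_zero_iff.2 hpq ?_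
    rw [MonomialOrder.leadingCoeff, M.toSyn.injective heq, hcoeff, hlc, sub_self]

theorem degree_eq_and_leadingCoeff_eq_of_degree_sub_ne
    (hp : p - q ≠ 0 → M.degree (p - q) ≠ M.degree p)
    (hq : p - q ≠ 0 → M.degree (p - q) ≠ M.degree q) :
    M.degree p = M.degree q ∧ M.leadingCoeff p = M.leadingCoeff q := by
  by_cases h : p - q = 0
  · simp [sub_eq_zero.1 h]
  have hdeg : M.degree p = M.degree q := by
    rcases lt_trichotomy (M.toSyn (M.degree p)) (M.toSyn (M.degree q)) with hlt | heq | hlt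
    · refine absurd ?_ (hq h)
      rw [← neg_sub, M.degree_neg, M.degree_sub_of_lt hlt]
    · exact M.toSyn.injective heq
    · exact absurd (M.degree_sub_of_lt hlt) (hp h)
  have hlt : M.degree (p - q) ≺[M] M.degree p :=
    (degree_sub_le_left hdeg).lt_of_ne (M.toSyn.injective.ne (hp h))
  exact ⟨hdeg, (degree_sub_lt_left_iff hdeg h).1 hlt⟩

variable [NoZeroDivisors R] {c : R}

theorem degree_monomial_mul (t : σ →₀ ℕ) (hc : c ≠ 0) (hp : p ≠ 0) :
    M.degree (monomial t c * p) = t + M.degree p := by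
  classical rw [M.degree_mul (by simpa using hc) hp, M.degree_monomial, if_neg hc]

theorem leadingCoeff_monomial_mul (t : σ →₀ ℕ) :
    M.leadingCoeff (monomial t c * p) = c * M.leadingCoeff p := by
  rw [M.leadingCoeff_mul, M.leadingCoeff_monomial]

end Polynomial

section Orders

omit [NeZero m]

variable {ple} {tle}

theorem wellFounded_of_le_imp {α : Type*} [Preorder α] [WellQuasiOrderedLE α]
    {r : α → α → Prop} [IsPreorder α r] (hr : ∀ x y, x ≤ y → r x y) :
    WellFounded fun x y => r x y ∧ ¬ r y x :=
  WellQuasiOrdered.wellFounded <|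
    wellQuasiOrdered_le.of_surjective (⟨id, @hr⟩ : (· ≤ ·) →r r) Function.surjective_id

namespace OrdersOK

theorem ple_of_le (hord : OrdersOK ple tle) {s t : PP n} (h : s ≤ t) : ple s t := by
  simpa [add_tsub_cancel_of_le h] using hord.ple_mul s 0 (t - s) (hord.ple_one_le _)

theorem wellFounded_strict_tle (hord : OrdersOK ple tle) : WellFounded (strict tle) := by
  have : IsPreorder (Term n m) tle := { refl := hord.tle_refl, trans := hord.tle_trans }
  have hext : ∀ u v : Term n m, u ≤ v → tle u v := fun u v h =>
    hord.tle_compat _ _ _ _ (hord.ple_of_le h.1) h.2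
  exact (wellFounded_of_le_imp hext).mono fun u v h =>
    ⟨h.1, fun h' => h.2 (hord.tle_antisymm _ _ h.1 h')⟩

theorem strict_of_tle_of_strict (hord : OrdersOK ple tle) {u v w : Term n m} (huv : tle u v)
    (hvw : strict tle v w) : strict tle u w :=
  ⟨hord.tle_trans _ _ _ huv hvw.1, fun h => hvw.2 (hord.tle_antisymm _ _ hvw.1 (h ▸ huv))⟩

theorem not_tle_of_strict (hord : OrdersOK ple tle) {u v : Term n m} (h : strict tle u v) :
    ¬ tle v u := fun h' => h.2 (hord.tle_antisymm _ _ h.1 h')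

theorem zero_tle [NeZero m] (hord : OrdersOK ple tle) (u : Term n m) : tle (0, 0) u :=
  hord.tle_compat _ _ _ _ (hord.ple_one_le _) (Fin.zero_le _)

/-- A copy of the power-products that carries the order `ple` instead of the componentwise one. -/
def Syn (_ : OrdersOK ple tle) : Type := PP n

instance (hord : OrdersOK ple tle) : AddCommMonoid hord.Syn :=
  inferInstanceAs (AddCommMonoid (PP n))

instance (hord : OrdersOK ple tle) : LinearOrder hord.Syn where
  le := ple
  le_refl := hord.ple_refl
  le_trans := hord.ple_trans
  le_antisymm := hord.ple_antisymm
  le_total := hord.ple_total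
  toDecidableLE := Classical.decRel _

/-- The admissible order `ple` on power-products as a monomial order. -/
def monomialOrder (hord : OrdersOK ple tle) : MonomialOrder (Fin n) where
  syn := hord.Syn
  isOrderedAddMonoid_syn :=
    { add_le_add_left s t h u := by
        rw [add_comm s, add_comm t]
        exact hord.ple_mul u s t h }
  toSyn := { toEquiv := Equiv.refl (PP n), map_add' := fun _ _ => rfl }
  toSyn_monotone _ _ := hord.ple_of_le
  wellFoundedLT_syn :=
    have : IsPreorder (PP n) ple := { refl := hord.ple_refl, trans := hord.ple_trans }
    ⟨(wellFounded_of_le_imp fun _ _ => hord.ple_of_le).mono fun _ _ h => lt_iff_le_not_ge.1 h⟩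

theorem monomialOrder_le_iff (hord : OrdersOK ple tle) {s t : PP n} :
    s ≼[hord.monomialOrder] t ↔ ple s t := Iff.rfl

theorem lp_eq_degree (hord : OrdersOK ple tle) (p : MvPolynomial (Fin n) K) :
    lp ple p = hord.monomialOrder.degree p := by
  by_cases hp : p = 0
  · simp [lp, hp]
  have hmax : ∀ s, coeff s p ≠ 0 → ple s (hord.monomialOrder.degree p) := fun s hs =>
    hord.monomialOrder_le_iff.1 (hord.monomialOrder.le_degree (mem_support_iff.2 hs))
  have h : ∃ t, coeff t p ≠ 0 ∧ ∀ s, coeff s p ≠ 0 → ple s t :=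
    ⟨_, hord.monomialOrder.leadingCoeff_ne_zero_iff.2 hp, hmax⟩
  rw [lp, dif_pos h]
  exact hord.ple_antisymm _ _ (hmax _ h.choose_spec.1)
    (h.choose_spec.2 _ (hord.monomialOrder.leadingCoeff_ne_zero_iff.2 hp))

theorem lc_eq_leadingCoeff (hord : OrdersOK ple tle) (p : MvPolynomial (Fin n) K) :
    lc ple p = hord.monomialOrder.leadingCoeff p := by
  rw [lc, hord.lp_eq_degree, MonomialOrder.leadingCoeff]

theorem lc_ne_zero (hord : OrdersOK ple tle) {p : MvPolynomial (Fin n) K} (hp : p ≠ 0) :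
    lc ple p ≠ 0 := by
  rwa [hord.lc_eq_leadingCoeff, MonomialOrder.leadingCoeff_ne_zero_iff]

end OrdersOK

end Orders

section Bar

omit [NeZero m]

variable {f} {ple} {tle} {g : Fin m → MvPolynomial (Fin n) K} {c : K} {t : PP n}

theorem bar_zero : bar f 0 = 0 := by simp [bar]

theorem bar_sub (a b : Fin m → MvPolynomial (Fin n) K) : bar f (a - b) = bar f a - bar f b := by
  simp [bar, sub_mul, Finset.sum_sub_distrib]

theorem bar_monomMul (c : K) (t : PP n) (a : Fin m → MvPolynomial (Fin n) K) :
    bar f (monomMul c t a) = monomial t c * bar f a := by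
  simp [bar, monomMul, Finset.mul_sum, mul_assoc]

theorem ne_zero_of_bar_ne_zero {a : Fin m → MvPolynomial (Fin n) K} (h : bar f a ≠ 0) : a ≠ 0 :=
  fun h0 => h (h0 ▸ bar_zero)

theorem bar_monomMul_ne_zero (hg : bar f g ≠ 0) (hc : c ≠ 0) : bar f (monomMul c t g) ≠ 0 := by
  rw [bar_monomMul]
  exact mul_ne_zero (by simpa using hc) hg

theorem lp_bar_monomMul (hord : OrdersOK ple tle) (hg : bar f g ≠ 0) (hc : c ≠ 0) :
    lp ple (bar f (monomMul c t g)) = t + lp ple (bar f g) := by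
  rw [bar_monomMul, hord.lp_eq_degree, degree_monomial_mul t hc hg, hord.lp_eq_degree]

theorem lc_bar_monomMul (hord : OrdersOK ple tle) :
    lc ple (bar f (monomMul c t g)) = c * lc ple (bar f g) := by
  rw [bar_monomMul, hord.lc_eq_leadingCoeff, leadingCoeff_monomial_mul, hord.lc_eq_leadingCoeff]

end Bar

section Coefficients

omit [NeZero m]

theorem mulTerm_zero (u : Term n m) : mulTerm 0 u = u := by
  simp [mulTerm]

theorem coeffM_zero (u : Term n m) : coeffM (0 : Fin m → MvPolynomial (Fin n) K) u = 0 := by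
  simp [coeffM]

theorem exists_coeffM_ne_zero {a : Fin m → MvPolynomial (Fin n) K} (ha : a ≠ 0) :
    ∃ u, coeffM a u ≠ 0 := by
  obtain ⟨i, hi⟩ := Function.ne_iff.1 ha
  obtain ⟨s, hs⟩ := ne_zero_iff.1 hi
  exact ⟨(s, i), hs⟩

theorem finite_coeffM_ne_zero (a : Fin m → MvPolynomial (Fin n) K) :
    {u | coeffM a u ≠ 0}.Finite := by
  refine (Set.finite_iUnion fun i => (a i).support.finite_toSet.image (·, i)).subset fun u hu => ?_
  exact Set.mem_iUnion.2 ⟨u.2, u.1, mem_support_iff.2 hu, rfl⟩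

theorem coeffM_sub (a b : Fin m → MvPolynomial (Fin n) K) (u : Term n m) :
    coeffM (a - b) u = coeffM a u - coeffM b u := by
  simp [coeffM]

theorem coeffM_monomMul_mulTerm (c : K) (t : PP n) (a : Fin m → MvPolynomial (Fin n) K)
    (u : Term n m) : coeffM (monomMul c t a) (mulTerm t u) = c * coeffM a u := by
  simp [coeffM, monomMul, mulTerm]

theorem exists_eq_mulTerm_of_coeffM_monomMul_ne_zero {c : K} {t : PP n}
    {a : Fin m → MvPolynomial (Fin n) K} {u : Term n m} (h : coeffM (monomMul c t a) u ≠ 0) :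
    ∃ v, u = mulTerm t v ∧ coeffM a v ≠ 0 := by
  rw [coeffM, monomMul, coeff_monomial_mul'] at h
  obtain ⟨htu, hne⟩ := ite_ne_right_iff.1 h
  exact ⟨(u.1 - t, u.2), by simp [mulTerm, add_tsub_cancel_of_le htu], right_ne_zero_of_mul hne⟩

end Coefficients

section Signature

variable {ple} {tle} {a b : Fin m → MvPolynomial (Fin n) K} {u v : Term n m} {c : K} {t : PP n}

theorem sig_zero : sig tle (0 : Fin m → MvPolynomial (Fin n) K) = (0, 0) := by
  simp [sig, coeffM_zero]

theorem lcM_ne_zero_and_tle_sig (hord : OrdersOK ple tle) (ha : a ≠ 0) :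
    lcM tle a ≠ 0 ∧ ∀ v, coeffM a v ≠ 0 → tle v (sig tle a) := by
  have : IsTrans (Term n m) tle := ⟨hord.tle_trans⟩
  have : Std.Total tle := ⟨hord.tle_total⟩
  have : Finite {u // coeffM a u ≠ 0} := finite_coeffM_ne_zero a
  have : Nonempty {u // coeffM a u ≠ 0} := (exists_coeffM_ne_zero ha).elim fun u hu => ⟨u, hu⟩
  obtain ⟨⟨u, hu⟩, hmax⟩ := Directed.finite_le
    (Std.Total.directed (r := tle) (Subtype.val : {u // coeffM a u ≠ 0} → Term n m)) id
  have h : ∃ u, coeffM a u ≠ 0 ∧ ∀ v, coeffM a v ≠ 0 → tle v u :=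
    ⟨u, hu, fun v hv => hmax ⟨v, hv⟩⟩
  rw [lcM, sig, dif_pos h]
  exact h.choose_spec

theorem lcM_ne_zero (hord : OrdersOK ple tle) (ha : a ≠ 0) : lcM tle a ≠ 0 :=
  (lcM_ne_zero_and_tle_sig hord ha).1

theorem tle_sig (hord : OrdersOK ple tle) (hv : coeffM a v ≠ 0) : tle v (sig tle a) :=
  (lcM_ne_zero_and_tle_sig hord (by rintro rfl; exact hv (coeffM_zero v))).2 v hv

theorem sig_tle (hord : OrdersOK ple tle) (h : ∀ v, coeffM a v ≠ 0 → tle v u) :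
    tle (sig tle a) u := by
  by_cases ha : a = 0
  · rw [ha, sig_zero]
    exact hord.zero_tle u
  · exact h _ (lcM_ne_zero hord ha)

theorem ne_zero_of_strict_sig (hord : OrdersOK ple tle) (h : strict tle v (sig tle a)) : a ≠ 0 := by
  rintro rfl
  rw [sig_zero] at h
  exact hord.not_tle_of_strict h (hord.zero_tle v)

theorem coeffM_eq_zero_of_strict (hord : OrdersOK ple tle) (h : strict tle (sig tle a) v) :
    coeffM a v = 0 :=
  not_not.1 fun hv => hord.not_tle_of_strict h (tle_sig hord hv)

theorem sig_monomMul_tle (hord : OrdersOK ple tle) :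
    tle (sig tle (monomMul c t a)) (mulTerm t (sig tle a)) := by
  refine sig_tle hord fun v hv => ?_
  obtain ⟨w, rfl, hw⟩ := exists_eq_mulTerm_of_coeffM_monomMul_ne_zero hv
  exact hord.tle_mul _ _ _ (tle_sig hord hw)

theorem sig_monomMul (hord : OrdersOK ple tle) (ha : a ≠ 0) (hc : c ≠ 0) :
    sig tle (monomMul c t a) = mulTerm t (sig tle a) := by
  refine hord.tle_antisymm _ _ (sig_monomMul_tle hord) (tle_sig hord ?_)
  rw [coeffM_monomMul_mulTerm]
  exact mul_ne_zero hc (lcM_ne_zero hord ha)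

theorem lcM_monomMul (hord : OrdersOK ple tle) (ha : a ≠ 0) (hc : c ≠ 0) :
    lcM tle (monomMul c t a) = c * lcM tle a := by
  rw [lcM, sig_monomMul hord ha hc, coeffM_monomMul_mulTerm, lcM]

theorem sig_sub_tle (hord : OrdersOK ple tle) (ha : tle (sig tle a) u) (hb : tle (sig tle b) u) :
    tle (sig tle (a - b)) u := by
  refine sig_tle hord fun v hv => ?_
  by_cases hav : coeffM a v = 0
  · refine hord.tle_trans _ _ _ (tle_sig hord fun hbv => hv ?_) hb
    rw [coeffM_sub, hav, hbv, sub_zero]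
  · exact hord.tle_trans _ _ _ (tle_sig hord hav) ha

theorem sig_sub_of_strict (hord : OrdersOK ple tle) (h : strict tle (sig tle b) (sig tle a)) :
    sig tle (a - b) = sig tle a := by
  refine hord.tle_antisymm _ _ (sig_sub_tle hord (hord.tle_refl _) h.1) (tle_sig hord ?_)
  rw [coeffM_sub, coeffM_eq_zero_of_strict hord h, sub_zero]
  exact lcM_ne_zero hord (ne_zero_of_strict_sig hord h)

theorem strict_sig_sub (hord : OrdersOK ple tle) (hsig : sig tle b = sig tle a)
    (hlc : lcM tle b = lcM tle a) (hab : a - b ≠ 0) :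
    strict tle (sig tle (a - b)) (sig tle a) := by
  refine ⟨sig_sub_tle hord (hord.tle_refl _) (hsig ▸ hord.tle_refl _), fun heq => ?_⟩
  refine lcM_ne_zero hord hab ?_
  rw [lcM, heq, coeffM_sub, sub_eq_zero, ← lcM, ← hlc, lcM, hsig]

theorem sig_sub_monomMul_tle (hord : OrdersOK ple tle)
    (h : tle (mulTerm t (sig tle b)) (sig tle a)) :
    tle (sig tle (a - monomMul c t b)) (sig tle a) :=
  sig_sub_tle hord (hord.tle_refl _) (hord.tle_trans _ _ _ (sig_monomMul_tle hord) h)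

theorem sig_sub_monomMul_of_strict (hord : OrdersOK ple tle)
    (h : strict tle (mulTerm t (sig tle b)) (sig tle a)) :
    sig tle (a - monomMul c t b) = sig tle a :=
  sig_sub_of_strict hord (hord.strict_of_tle_of_strict (sig_monomMul_tle hord) h)

theorem exists_sig_monomMul_eq_and_lcM_monomMul_eq (hord : OrdersOK ple tle) (ha : a ≠ 0)
    (hb : b ≠ 0) (h : mulTerm t (sig tle b) = sig tle a) :
    ∃ c : K, c ≠ 0 ∧ sig tle (monomMul c t b) = sig tle a ∧
      lcM tle (monomMul c t b) = lcM tle a := by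
  have hc : lcM tle a / lcM tle b ≠ 0 := div_ne_zero (lcM_ne_zero hord ha) (lcM_ne_zero hord hb)
  refine ⟨_, hc, (sig_monomMul hord hb hc).trans h, ?_⟩
  rw [lcM_monomMul hord hb hc, div_mul_cancel₀ _ (lcM_ne_zero hord hb)]

end Signature

section Reduction

variable {f} {ple} {tle} {G : Set (Fin m → MvPolynomial (Fin n) K)}
  {a b d g : Fin m → MvPolynomial (Fin n) K} {t : PP n} {c : K}

theorem SigRedZero.of_bar_eq_zero (h : bar f a = 0) : SigRedZero f ple tle G a := ⟨a, .refl, h⟩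

theorem SigRedZero.of_reflTransGen (hab : Relation.ReflTransGen (SigRedStep f ple tle G) a b)
    (hb : SigRedZero f ple tle G b) : SigRedZero f ple tle G a :=
  let ⟨z, hbz, hz⟩ := hb
  ⟨z, hab.trans hbz, hz⟩

theorem SigRedZero.of_bar_eq (hord : OrdersOK ple tle) (hd : SigRedZero f ple tle G d)
    (hbar : bar f a = bar f d) (hsig : strict tle (sig tle d) (sig tle a)) :
    SigRedZero f ple tle G a := by
  obtain ⟨z, hdz, hz⟩ := hd
  induction hdz using Relation.ReflTransGen.head_induction_on generalizing a with
  | refl => exact .of_bar_eq_zero (hbar.trans hz)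
  | head hstep _ ih =>
    obtain ⟨g, t, hgG, hg, hcoeff, rfl, hle⟩ := hstep
    have hreg := hord.strict_of_tle_of_strict hle hsig
    rw [← hbar] at hcoeff ih
    refine .of_reflTransGen (.single ⟨g, t, hgG, hg, hcoeff, rfl, hreg.1⟩) (ih ?_ ?_)
    · rw [bar_sub, bar_sub, hbar]
    · rw [sig_sub_monomMul_of_strict hord hreg]
      exact hord.strict_of_tle_of_strict (sig_sub_monomMul_tle hord hle) hsig

theorem RedStepWith.sig_tle (hord : OrdersOK ple tle) (h : RedStepWith f ple tle G a b g t) :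
    tle (sig tle b) (sig tle a) := by
  obtain ⟨-, -, -, rfl, hle⟩ := h
  exact sig_sub_monomMul_tle hord hle

theorem RedStepWith.lp_bar_eq_of_not_topWith (hord : OrdersOK ple tle)
    (hstep : RedStepWith f ple tle G a b g t) (htop : ¬ TopWith f ple a g t) :
    bar f b ≠ 0 ∧ lp ple (bar f b) = lp ple (bar f a) := by
  obtain ⟨-, hg, hcoeff, rfl, -⟩ := hstep
  set c := coeff (t + lp ple (bar f g)) (bar f a) / lc ple (bar f g)
  have hc : c ≠ 0 := div_ne_zero hcoeff (hord.lc_ne_zero hg)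
  have hlt : hord.monomialOrder.degree (bar f (monomMul c t g)) ≺[hord.monomialOrder]
      hord.monomialOrder.degree (bar f a) := by
    rw [← hord.lp_eq_degree, lp_bar_monomMul hord hg hc]
    refine lt_of_le_of_ne (hord.monomialOrder.le_degree (mem_support_iff.2 hcoeff))
      (hord.monomialOrder.toSyn.injective.ne ?_)
    rwa [← hord.lp_eq_degree]
  rw [bar_sub, hord.lp_eq_degree, hord.lp_eq_degree]
  refine ⟨sub_ne_zero.2 fun heq => ?_, hord.monomialOrder.degree_sub_of_lt hlt⟩
  exact hlt.ne (by rw [← heq])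

theorem SigRedZero.exists_topWith (hord : OrdersOK ple tle) (hd : SigRedZero f ple tle G d)
    (hbar : bar f d ≠ 0) :
    ∃ g ∈ G, ∃ t, bar f g ≠ 0 ∧ TopWith f ple d g t ∧ tle (mulTerm t (sig tle g)) (sig tle d) := by
  obtain ⟨z, hdz, hz⟩ := hd
  induction hdz using Relation.ReflTransGen.head_induction_on with
  | refl => exact absurd hz hbar
  | @head d _ hstep _ ih =>
    obtain ⟨g, t, hgt⟩ := hstep
    by_cases htop : TopWith f ple d g t
    · obtain ⟨hgG, hg, -, -, hle⟩ := hgt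
      exact ⟨g, hgG, t, hg, htop, hle⟩
    obtain ⟨hbare, hlp⟩ := hgt.lp_bar_eq_of_not_topWith hord htop
    obtain ⟨h, hhG, s, hh, htop', hle⟩ := ih hbare
    exact ⟨h, hhG, s, hh, Eq.trans htop' hlp, hord.tle_trans _ _ _ hle (hgt.sig_tle hord)⟩

theorem RegTopRedStep.sigRedStep (h : RegTopRedStep f ple tle G a b) :
    SigRedStep f ple tle G a b :=
  let ⟨g, t, hstep, _⟩ := h
  ⟨g, t, hstep⟩

theorem RegTopRedStep.sig_eq (hord : OrdersOK ple tle) (h : RegTopRedStep f ple tle G a b) :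
    sig tle b = sig tle a := by
  obtain ⟨g, t, ⟨-, -, -, rfl, -⟩, hreg, -⟩ := h
  exact sig_sub_monomMul_of_strict hord hreg

theorem RegTopRedStep.withBotDegree_bar_lt (hord : OrdersOK ple tle)
    (h : RegTopRedStep f ple tle G a b) :
    hord.monomialOrder.withBotDegree (bar f b) ≺'[hord.monomialOrder]
      hord.monomialOrder.withBotDegree (bar f a) := by
  obtain ⟨g, t, ⟨-, hg, hcoeff, rfl, -⟩, -, htop⟩ := h
  rw [htop] at hcoeff ⊢
  set c := coeff (lp ple (bar f a)) (bar f a) / lc ple (bar f g)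
  have hlp : lp ple (bar f a) = lp ple (bar f (monomMul c t g)) := by
    rw [lp_bar_monomMul hord hg (div_ne_zero hcoeff (hord.lc_ne_zero hg)), htop]
  have hlc : lc ple (bar f a) = lc ple (bar f (monomMul c t g)) := by
    rw [lc_bar_monomMul hord, div_mul_cancel₀ _ (hord.lc_ne_zero hg), lc]
  rw [hord.lp_eq_degree, hord.lp_eq_degree] at hlp
  rw [hord.lc_eq_leadingCoeff, hord.lc_eq_leadingCoeff] at hlc
  rw [bar_sub, MonomialOrder.withBotDegree_lt_withBotDegree_iff]
  by_cases h0 : bar f a - bar f (monomMul c t g) = 0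
  · exact .inr ⟨h0, fun ha => hcoeff (by rw [ha, coeff_zero])⟩
  · exact .inl ((degree_sub_lt_left_iff hlp h0).2 hlc)

variable (f G) in
theorem exists_regTopIrred (hord : OrdersOK ple tle) (a : Fin m → MvPolynomial (Fin n) K) :
    ∃ b, Relation.ReflTransGen (SigRedStep f ple tle G) a b ∧ sig tle b = sig tle a ∧
      RegTopIrred f ple tle G b := by
  let reducts := {b | Relation.ReflTransGen (SigRedStep f ple tle G) a b ∧ sig tle b = sig tle a}
  obtain ⟨b, ⟨hab, hsig⟩, hmin⟩ := (InvImage.wf (fun b : Fin m → MvPolynomial (Fin n) K =>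
    hord.monomialOrder.toWithBotSyn (hord.monomialOrder.withBotDegree (bar f b)))
      wellFounded_lt).has_min reducts ⟨a, .refl, rfl⟩
  refine ⟨b, hab, hsig, fun d hbd => hmin d ?_ (hbd.withBotDegree_bar_lt hord)⟩
  exact ⟨hab.tail hbd.sigRedStep, (hbd.sig_eq hord).trans hsig⟩

theorem regTopIrred_iff (hord : OrdersOK ple tle) (ha : bar f a ≠ 0) :
    RegTopIrred f ple tle G a ↔
      ∀ g ∈ G, bar f g ≠ 0 → ∀ t, TopWith f ple a g t → ¬ RegularWith tle a g t := by
  refine ⟨fun h g hgG hg t htop hreg => ?_, fun h b ⟨g, t, hstep, hreg, htop⟩ => ?_⟩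
  · refine h _ ⟨g, t, ⟨hgG, hg, ?_, rfl, hreg.1⟩, hreg, htop⟩
    rw [htop]
    exact hord.lc_ne_zero ha
  · exact h g hstep.1 hstep.2.1 t htop hreg

theorem RegTopIrred.monomMul (hord : OrdersOK ple tle) (hg : bar f g ≠ 0)
    (h : RegTopIrred f ple tle G (monomMul 1 t g)) (hc : c ≠ 0) :
    RegTopIrred f ple tle G (monomMul c t g) := by
  rw [regTopIrred_iff hord (bar_monomMul_ne_zero hg one_ne_zero)] at h
  rw [regTopIrred_iff hord (bar_monomMul_ne_zero hg hc)]
  simpa only [TopWith, RegularWith, lp_bar_monomMul hord hg hc, lp_bar_monomMul hord hg one_ne_zero,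
    sig_monomMul hord (ne_zero_of_bar_ne_zero hg) hc,
    sig_monomMul hord (ne_zero_of_bar_ne_zero hg) one_ne_zero] using h

theorem RegTopIrred.lp_bar_ne (hord : OrdersOK ple tle) (h : RegTopIrred f ple tle G a)
    (ha : bar f a ≠ 0) (hd : SigRedZero f ple tle G d) (hbard : bar f d ≠ 0)
    (hlt : strict tle (sig tle d) (sig tle a)) : lp ple (bar f d) ≠ lp ple (bar f a) := by
  obtain ⟨g, hgG, t, hg, htop, hle⟩ := hd.exists_topWith hord hbard
  exact fun heq => (regTopIrred_iff hord ha).1 h g hgG hg t (Eq.trans htop heq)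
    (hord.strict_of_tle_of_strict hle hlt)

end Reduction

section SignatureBasis

variable {f} {ple} {tle} {G : Set (Fin m → MvPolynomial (Fin n) K)}
  {a b g z : Fin m → MvPolynomial (Fin n) K} {t : PP n} {u : Term n m}

theorem IsSigGBUpto.sigRedZero_sub (hord : OrdersOK ple tle)
    (hGB : IsSigGBUpto f ple tle G (sig tle a)) (hsig : sig tle b = sig tle a)
    (hlc : lcM tle b = lcM tle a) : SigRedZero f ple tle G (a - b) := by
  by_cases hab : a - b = 0
  · exact .of_bar_eq_zero (hab ▸ bar_zero)
  · exact hGB _ (strict_sig_sub hord hsig hlc hab) _ hab rfl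

theorem RegTopIrred.lp_eq_and_lc_eq (hord : OrdersOK ple tle)
    (hGB : IsSigGBUpto f ple tle G (sig tle a)) (ha : RegTopIrred f ple tle G a)
    (hb : RegTopIrred f ple tle G b) (hsig : sig tle b = sig tle a)
    (hlc : lcM tle b = lcM tle a) (hbara : bar f a ≠ 0) (hbarb : bar f b ≠ 0) :
    lp ple (bar f a) = lp ple (bar f b) ∧ lc ple (bar f a) = lc ple (bar f b) := by
  have hred : SigRedZero f ple tle G (a - b) := hGB.sigRedZero_sub hord hsig hlc
  have hlt : bar f (a - b) ≠ 0 → strict tle (sig tle (a - b)) (sig tle a) := fun h =>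
    strict_sig_sub hord hsig hlc (ne_zero_of_bar_ne_zero h)
  have hnea : bar f (a - b) ≠ 0 → lp ple (bar f (a - b)) ≠ lp ple (bar f a) := fun h =>
    ha.lp_bar_ne hord hbara hred h (hlt h)
  have hneb : bar f (a - b) ≠ 0 → lp ple (bar f (a - b)) ≠ lp ple (bar f b) := fun h =>
    hb.lp_bar_ne hord hbarb hred h (hsig ▸ hlt h)
  simp only [bar_sub, hord.lp_eq_degree, hord.lc_eq_leadingCoeff] at hnea hneb ⊢
  exact degree_eq_and_leadingCoeff_eq_of_degree_sub_ne hnea hneb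

theorem isSigGBIn_mulTerm_of_bar_eq_zero (hord : OrdersOK ple tle)
    (hGB : IsSigGBUpto f ple tle G (mulTerm t (sig tle z))) (hz : z ≠ 0) (hbar : bar f z = 0) :
    IsSigGBIn f ple tle G (mulTerm t (sig tle z)) := by
  intro a ha hsiga
  rw [← hsiga] at hGB
  obtain ⟨c, -, hsig, hlc⟩ := exists_sig_monomMul_eq_and_lcM_monomMul_eq hord ha hz hsiga.symm
  have hbara : bar f a = bar f (a - monomMul c t z) := by
    rw [bar_sub, bar_monomMul, hbar, mul_zero, sub_zero]
  by_cases h0 : a - monomMul c t z = 0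
  · exact .of_bar_eq_zero (by rw [hbara, h0, bar_zero])
  · exact (hGB.sigRedZero_sub hord hsig hlc).of_bar_eq hord hbara (strict_sig_sub hord hsig hlc h0)

theorem isSigGBIn_mulTerm_of_regTopIrred (hord : OrdersOK ple tle)
    (hGB : IsSigGBUpto f ple tle G (mulTerm t (sig tle g))) (hgG : g ∈ G) (hg : bar f g ≠ 0)
    (hirr : RegTopIrred f ple tle G (monomMul 1 t g)) :
    IsSigGBIn f ple tle G (mulTerm t (sig tle g)) := by
  intro a _ hsiga
  obtain ⟨b, hab, hsigb, hb⟩ := exists_regTopIrred f G hord a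
  refine .of_reflTransGen hab ?_
  by_cases hbarb : bar f b = 0
  · exact .of_bar_eq_zero hbarb
  replace hsigb : sig tle b = mulTerm t (sig tle g) := hsigb.trans hsiga
  obtain ⟨c, hc, hsig, hlc⟩ := exists_sig_monomMul_eq_and_lcM_monomMul_eq hord
    (ne_zero_of_bar_ne_zero hbarb) (ne_zero_of_bar_ne_zero hg) hsigb.symm
  rw [← hsigb] at hGB
  obtain ⟨hlpb, hlcb⟩ := hb.lp_eq_and_lc_eq hord hGB (hirr.monomMul hord hg hc) hsig hlc hbarb
    (bar_monomMul_ne_zero hg hc)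
  rw [lp_bar_monomMul hord hg hc] at hlpb
  rw [lc_bar_monomMul hord] at hlcb
  refine .of_reflTransGen (.single ⟨g, t, hgG, hg, ?_, ?_, hsigb ▸ hord.tle_refl _⟩)
    (hGB.sigRedZero_sub hord hsig hlc)
  · rw [← hlpb]
    exact hord.lc_ne_zero hbarb
  · rw [← hlpb, ← lc, hlcb, mul_div_cancel_right₀ _ (hord.lc_ne_zero hg)]

theorem isSigGBIn_of_isSyzSig (hord : OrdersOK ple tle) (hGB : IsSigGBUpto f ple tle G u)
    (hu : IsSyzSig f tle u) : IsSigGBIn f ple tle G u := by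
  obtain ⟨z, hz, rfl, hbar⟩ := hu
  rw [← mulTerm_zero (sig tle z)] at hGB ⊢
  exact isSigGBIn_mulTerm_of_bar_eq_zero hord hGB hz hbar

theorem rb_imp_sigGB_general (hord : OrdersOK ple tle)
    (hG : ∀ v, strict tle v u → IsSyzSig f tle v ∨ ∃ g ∈ G, g ≠ 0 ∧ ∃ t,
      v = mulTerm t (sig tle g) ∧ RegTopIrred f ple tle G (monomMul 1 t g)) :
    IsSigGBUpto f ple tle G u := by
  intro v
  induction v using hord.wellFounded_strict_tle.induction with
  | _ v ih =>
  intro hv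
  have hGB : IsSigGBUpto f ple tle G v := fun w hw =>
    ih w hw (hord.strict_of_tle_of_strict hw.1 hv)
  rcases hG v hv with hsyz | ⟨g, hgG, hg, t, rfl, hirr⟩
  · exact isSigGBIn_of_isSyzSig hord hGB hsyz
  by_cases hbar : bar f g = 0
  · exact isSigGBIn_mulTerm_of_bar_eq_zero hord hGB hg hbar
  · exact isSigGBIn_mulTerm_of_regTopIrred hord hGB hgG hbar hirr

theorem IsCanonRewriter.eq_mulTerm
    {ro : Term n m × MvPolynomial (Fin n) K → Term n m × MvPolynomial (Fin n) K → Prop}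
    (hg : IsCanonRewriter f tle ro G u g) :
    u = mulTerm (u.1 - (sig tle g).1) (sig tle g) := by
  obtain ⟨t, ht⟩ := hg.2.2.1
  rw [ht]
  simp [mulTerm]

end SignatureBasis

/-- a rewrite basis up to `u` is a signature Gröbner basis up to `u`. -/
theorem rb_imp_sigGB (hord : OrdersOK ple tle)
    (ro : Term n m × MvPolynomial (Fin n) K → Term n m × MvPolynomial (Fin n) K → Prop)
    (hro : IsRewriteOrder f ple tle ro)
    (G : Set (Fin m → MvPolynomial (Fin n) K)) (u : Term n m)
    (hRB : IsRBUpto f ple tle ro G u) :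
    IsSigGBUpto f ple tle G u := by
  refine rb_imp_sigGB_general hord fun v hv => (hRB v hv).imp_right fun ⟨g, hg, hirr⟩ => ?_
  exact ⟨g, hg.1, hg.2.1, _, hg.eq_mulTerm, hirr⟩

end

end SigGB
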